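/- arXiv:2310.20037 — 2 statements merged into one kernel-verified Lean document; each statement's English description precedes it below -/
import Mathlib

section
/- Let X, Y, Z, gλ, uλ be as in the mean field optimization setting, with gλ lower semi-continuous and bounded below, the map x ↦ {gλ(x,y) : y ∈ Z_x} lower semi-continuous, and BRλ(x) nonempty for all x. Then for any Borel probability measure m on X, inf_{μ ∈ 𝒫_m(Z)} ∫_Z gλ dμ = ∫_X uλ dm. -/
open MeasureTheory Filter Topology
open scoped RealInnerProductSpace ENNReal

/-!
For `μ` carried by `Z` with first marginal `m`, integrating `uλ(x) ≤ gλ(x, y)` over `Z` gives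
`∫ uλ dm ≤ ∫ gλ dμ`. Conversely, a measurable selection `s` of the `ε`-minimisers of `gλ(x, ·)` on
the sections `Z_x` turns `m` into the law of `(x, s x)`, which has first marginal `m` and is
`ε`-optimal.

Both the measurability of `uλ` up to a null set and the selection come from one fact. Let
`f : (ℕ → ℕ) → X` be continuous. By choosing the bounds `b 0, b 1, …` one after the other, the
compact boxes `{σ | σ ≤ b}` can be made to have images of measure arbitrarily close to that of
`range f`. Hence analytic sets are null-measurable, and it suffices to select over each compact box.
There, parametrising the box by the Cantor set, one picks the least parameter in each fibre.
-/

section Capacitability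

/-- The sequences bounded by `b` in their first `k` coordinates. They decrease to the compact set
`Set.Iic b` and replace it while its bounds are being chosen one by one. -/
def initialBox (b : ℕ → ℕ) (k : ℕ) : Set (ℕ → ℕ) :=
  {σ | ∀ i < k, σ i ≤ b i}

theorem initialBox_antitone (b : ℕ → ℕ) : Antitone (initialBox b) :=
  fun _ _ hkl _ hσ i hi => hσ i (hi.trans_le hkl)

theorem isCompact_Iic_of_orderBot {α : Type*} [Preorder α] [OrderBot α] [TopologicalSpace α]
    [CompactIccSpace α] (a : α) : IsCompact (Set.Iic a) :=
  Set.Icc_bot (a := a) ▸ isCompact_Icc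

theorem exists_initialBox_subset_of_Iic_subset {b : ℕ → ℕ} {U : Set (ℕ → ℕ)} (hU : IsOpen U)
    (hbU : Set.Iic b ⊆ U) : ∃ k, initialBox b k ⊆ U := by
  by_contra! hnot
  choose σ hσbox hσU using fun k => Set.not_subset.1 (hnot k)
  obtain ⟨τ, hτb, φ, hφ, hlim⟩ :=
    (isCompact_Iic_of_orderBot b).tendsto_subseq fun k => (inf_le_right : σ k ⊓ b ≤ b)
  have hσlim : Tendsto (σ ∘ φ) atTop (𝓝 τ) := by
    rw [tendsto_pi_nhds] at hlim ⊢
    intro i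
    refine (hlim i).congr' ?_
    filter_upwards [eventually_gt_atTop i] with k hik
    exact min_eq_left (hσbox (φ k) i (hik.trans_le (hφ.id_le k)))
  exact hU.isClosed_compl.mem_of_tendsto hσlim (Eventually.of_forall fun k => hσU (φ k)) (hbU hτb)

theorem exists_forall_lt_measure_image_initialBox {X : Type*} [MeasurableSpace X] {m : Measure X}
    {f : (ℕ → ℕ) → X} {a : ℝ≥0∞} (ha : a < m (Set.range f)) :
    ∃ b : ℕ → ℕ, ∀ k, a < m (f '' initialBox b k) := by
  have exists_bound (T : {T : Set (ℕ → ℕ) // a < m (f '' T)}) (k : ℕ) :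
      ∃ j : ℕ, a < m (f '' (T.1 ∩ {σ | σ k ≤ j})) := by
    have hmono : Monotone fun j : ℕ => f '' (T.1 ∩ {σ | σ k ≤ j}) := fun i j hij =>
      Set.image_mono (Set.inter_subset_inter_right _ fun σ (hσ : σ k ≤ i) => hσ.trans hij)
    have hunion : ⋃ j : ℕ, f '' (T.1 ∩ {σ | σ k ≤ j}) = f '' T.1 := by
      rw [← Set.image_iUnion, ← Set.inter_iUnion, Set.inter_eq_left.2]
      exact fun σ _ => Set.mem_iUnion.2 ⟨σ k, le_refl (σ k)⟩
    have hT := T.2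
    rwa [← hunion, hmono.measure_iUnion, lt_iSup_iff] at hT
  choose bound hbound using exists_bound
  let T : ℕ → {T : Set (ℕ → ℕ) // a < m (f '' T)} := fun k =>
    Nat.rec ⟨Set.univ, by rwa [Set.image_univ]⟩
      (fun k T => ⟨T.1 ∩ {σ | σ k ≤ bound T k}, hbound T k⟩) k
  let b : ℕ → ℕ := fun k => bound (T k) k
  have hT (k : ℕ) : (T k).1 ⊆ initialBox b k := by
    induction k with
    | zero => exact fun σ _ i hi => absurd hi i.not_lt_zero
    | succ k ih =>
      intro σ hσ i hi
      obtain hik | rfl := Nat.lt_succ_iff_lt_or_eq.1 hi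
      · exact ih hσ.1 i hik
      · exact hσ.2
  exact ⟨b, fun k => (T k).2.trans_le (measure_mono (Set.image_mono (hT k)))⟩

variable {X : Type*} [TopologicalSpace X] [T2Space X]

theorem iInter_closure_image_initialBox_subset {f : (ℕ → ℕ) → X} (hf : Continuous f)
    (b : ℕ → ℕ) : ⋂ k, closure (f '' initialBox b k) ⊆ f '' Set.Iic b := by
  intro x hx
  by_contra hxb
  obtain ⟨U, V, hU, hV, hbU, hxV, hUV⟩ :=
    ((isCompact_Iic_of_orderBot b).image hf).separation_of_notMem hxb
  obtain ⟨k, hk⟩ :=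
    exists_initialBox_subset_of_Iic_subset (hU.preimage hf) (Set.image_subset_iff.1 hbU)
  have hkV : Disjoint (closure (f '' initialBox b k)) V :=
    (hUV.mono_left (Set.image_subset_iff.2 hk)).closure_left hV
  exact hkV.notMem_of_mem_right hxV (Set.mem_iInter.1 hx k)

variable [MeasurableSpace X] [OpensMeasurableSpace X]

theorem exists_le_measure_image_Iic {m : Measure X} [IsFiniteMeasure m] {f : (ℕ → ℕ) → X}
    (hf : Continuous f) {a : ℝ≥0∞} (ha : a < m (Set.range f)) :
    ∃ b : ℕ → ℕ, a ≤ m (f '' Set.Iic b) := by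
  obtain ⟨b, hb⟩ := exists_forall_lt_measure_image_initialBox ha
  have hanti : Antitone fun k => closure (f '' initialBox b k) := fun _ _ hkl =>
    closure_mono (Set.image_mono (initialBox_antitone b hkl))
  refine ⟨b, ?_⟩
  calc a ≤ ⨅ k, m (closure (f '' initialBox b k)) :=
        le_iInf fun k => (hb k).le.trans (measure_mono subset_closure)
    _ = m (⋂ k, closure (f '' initialBox b k)) :=
        (hanti.measure_iInter (fun k => isClosed_closure.measurableSet.nullMeasurableSet)
          ⟨0, measure_ne_top _ _⟩).symm
    _ ≤ m (f '' Set.Iic b) := measure_mono (iInter_closure_image_initialBox_subset hf b)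

theorem measurableSet_image_Iic {f : (ℕ → ℕ) → X} (hf : Continuous f) (b : ℕ → ℕ) :
    MeasurableSet (f '' Set.Iic b) :=
  ((isCompact_Iic_of_orderBot b).image hf).isClosed.measurableSet

theorem exists_iUnion_image_Iic_ae_eq_range (m : Measure X) [SFinite m] {f : (ℕ → ℕ) → X}
    (hf : Continuous f) :
    ∃ b : ℕ → ℕ → ℕ, (⋃ n, f '' Set.Iic (b n)) =ᵐ[m] Set.range f := by
  obtain ⟨b, hb⟩ : ∃ b : ℕ → ℕ → ℕ,
      m.toFinite (Set.range f) ≤ m.toFinite (⋃ n, f '' Set.Iic (b n)) := by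
    rcases eq_zero_or_pos (m.toFinite (Set.range f)) with hzero | hpos
    · exact ⟨0, hzero.trans_le zero_le⟩
    obtain ⟨a, -, ha, hlim⟩ := exists_seq_strictMono_tendsto' hpos
    choose b hb using fun n => exists_le_measure_image_Iic hf (ha n).2
    exact ⟨b, le_of_tendsto' hlim fun n =>
      (hb n).trans (measure_mono (Set.subset_iUnion (fun n => f '' Set.Iic (b n)) n))⟩
  have hmeas : MeasurableSet (⋃ n, f '' Set.Iic (b n)) :=
    MeasurableSet.iUnion fun n => measurableSet_image_Iic hf (b n)
  exact ⟨b, (absolutelyContinuous_toFinite m).ae_eq <| ae_eq_of_subset_of_measure_ge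
    (Set.iUnion_subset fun _ => Set.image_subset_range _ _) hb hmeas.nullMeasurableSet
    (measure_ne_top _ _)⟩

theorem nullMeasurableSet_of_analyticSet (m : Measure X) [SFinite m] {S : Set X}
    (hS : AnalyticSet S) : NullMeasurableSet S m := by
  rw [AnalyticSet] at hS
  obtain rfl | ⟨f, hf, rfl⟩ := hS
  · exact MeasurableSet.empty.nullMeasurableSet
  · obtain ⟨b, hb⟩ := exists_iUnion_image_Iic_ae_eq_range m hf
    exact ⟨_, MeasurableSet.iUnion fun n => measurableSet_image_Iic hf (b n), hb.symm⟩

end Capacitability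

section Selection

theorem exists_measurable_selection_iUnion {X Y : Type*} [MeasurableSpace X] [MeasurableSpace Y]
    {S : Set (X × Y)} {B : ℕ → Set X} (hB : ∀ n, MeasurableSet (B n)) {s : ℕ → X → Y}
    (hs : ∀ n, Measurable (s n)) (hsS : ∀ n, ∀ x ∈ B n, (x, s n x) ∈ S) :
    ∃ t : X → Y, Measurable t ∧ ∀ x ∈ ⋃ n, B n, (x, t x) ∈ S := by
  obtain ⟨t, ht, hts⟩ := exists_measurable_piecewise (disjointed B)
    (fun n => MeasurableSet.disjointed hB n) s hs
    fun i j hij x hx => ((disjoint_disjointed B hij).le_bot hx).elim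
  refine ⟨t, ht, fun x hx => ?_⟩
  rw [← iUnion_disjointed, Set.mem_iUnion] at hx
  obtain ⟨n, hn⟩ := hx
  rw [hts n hn]
  exact hsS n x (disjointed_subset B n hn)

variable {X : Type*} [TopologicalSpace X] [T2Space X] [MeasurableSpace X] [OpensMeasurableSpace X]

theorem exists_measurable_section_of_compact_subtype {α : Type*} [LinearOrder α]
    [TopologicalSpace α] [OrderTopology α] [SecondCountableTopology α] [MeasurableSpace α]
    [BorelSpace α] {K : Set α} [CompactSpace K] [Nonempty K] {q : K → X} (hq : Continuous q) :
    ∃ s : X → K, Measurable s ∧ ∀ x ∈ Set.range q, q (s x) = x := by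
  obtain ⟨top, -, htop⟩ := isCompact_univ.exists_isGreatest (Set.univ_nonempty (α := K))
  -- Adjoining the greatest point makes every fibre nonempty and leaves the minima unchanged.
  have hmin (x : X) : ∃ c, IsLeast (insert top (q ⁻¹' {x})) c :=
    ((isClosed_singleton.preimage hq).isCompact.insert top).exists_isLeast
      (Set.insert_nonempty _ _)
  choose s hs using hmin
  refine ⟨s, ?_, ?_⟩
  · suffices Measurable fun x => (s x : α) from this.subtype_mk
    refine measurable_of_Iic fun a => ?_
    have hpre : (fun x => (s x : α)) ⁻¹' Set.Iic a =
        q '' {c | (c : α) ≤ a} ∪ {_x | (top : α) ≤ a} := by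
      ext x
      constructor
      · intro hx
        obtain htop | hfib := (hs x).1
        · exact Or.inr (htop ▸ hx)
        · exact Or.inl ⟨s x, hx, hfib⟩
      · rintro (⟨c, hca, rfl⟩ | hta)
        · exact le_trans (α := α) ((hs (q c)).2 (Or.inr rfl)) hca
        · exact le_trans (α := α) ((hs x).2 (Or.inl rfl)) hta
    rw [hpre]
    have hclosed : IsClosed {c : K | (c : α) ≤ a} := isClosed_Iic.preimage continuous_subtype_val
    exact (hclosed.isCompact.image hq).isClosed.measurableSet.union (MeasurableSet.const _)
  · rintro _ ⟨c, rfl⟩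
    obtain hst | hfib := (hs (q c)).1
    · have hc : c = top := le_antisymm (htop trivial) (hst ▸ (hs (q c)).2 (Or.inr rfl))
      rw [hst, hc]
    · exact hfib

theorem exists_measurable_section_of_compactSpace {C : Type*} [TopologicalSpace C]
    [CompactSpace C] [TopologicalSpace.MetrizableSpace C] [Nonempty C] [MeasurableSpace C]
    [BorelSpace C] {q : C → X} (hq : Continuous q) :
    ∃ s : X → C, Measurable s ∧ ∀ x ∈ Set.range q, q (s x) = x := by
  let _ : MetricSpace C := TopologicalSpace.metrizableSpaceMetric C
  have : CompactSpace cantorSet := isCompact_iff_compactSpace.1 isCompact_cantorSet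
  have : Nonempty cantorSet := ⟨⟨0, zero_mem_cantorSet⟩⟩
  obtain ⟨e, he, hesurj⟩ := exists_nat_bool_continuous_surjective_of_compact C
  let p : cantorSet → C := e ∘ cantorSetHomeomorphNatToBool
  have hp : Continuous p := he.comp cantorSetHomeomorphNatToBool.continuous
  have hpsurj : p.Surjective := hesurj.comp cantorSetHomeomorphNatToBool.surjective
  obtain ⟨s, hs, hsec⟩ := exists_measurable_section_of_compact_subtype (hq.comp hp)
  refine ⟨p ∘ s, hp.measurable.comp hs, fun x hx => hsec x ?_⟩
  rwa [hpsurj.range_comp]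

/-- The **von Neumann–Aumann selection theorem** for analytic sets. -/
theorem exists_measurable_ae_selection_of_analyticSet {Y : Type*} [TopologicalSpace Y]
    [MeasurableSpace Y] [BorelSpace Y] [Nonempty Y] (m : Measure X) [SFinite m] {S : Set (X × Y)}
    (hS : AnalyticSet S) :
    ∃ s : X → Y, Measurable s ∧ ∀ᵐ x ∂m, x ∈ Prod.fst '' S → (x, s x) ∈ S := by
  rw [AnalyticSet] at hS
  obtain rfl | ⟨f, hf, rfl⟩ := hS
  · exact ⟨fun _ => Classical.arbitrary Y, measurable_const, by simp⟩
  have hq : Continuous (Prod.fst ∘ f) := continuous_fst.comp hf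
  have select (b : ℕ → ℕ) : ∃ s : X → Y, Measurable s ∧
      ∀ x ∈ (Prod.fst ∘ f) '' Set.Iic b, (x, s x) ∈ Set.range f := by
    have : CompactSpace (Set.Iic b) := isCompact_iff_compactSpace.1 (isCompact_Iic_of_orderBot b)
    have hqb : Continuous fun σ : Set.Iic b => (f σ).1 := hq.comp continuous_subtype_val
    obtain ⟨c, hc, hsec⟩ := exists_measurable_section_of_compactSpace hqb
    refine ⟨fun x => (f (c x)).2,
      (continuous_snd.comp (hf.comp continuous_subtype_val)).measurable.comp hc, ?_⟩
    rintro x ⟨σ, hσ, hx⟩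
    exact ⟨c x, Prod.ext (hsec x ⟨⟨σ, hσ⟩, hx⟩) rfl⟩
  choose s hs hsf using select
  obtain ⟨b, hb⟩ := exists_iUnion_image_Iic_ae_eq_range m hq
  obtain ⟨t, ht, htf⟩ := exists_measurable_selection_iUnion
    (fun n => measurableSet_image_Iic hq (b n)) (fun n => hs (b n)) fun n => hsf (b n)
  refine ⟨t, ht, ?_⟩
  filter_upwards [hb.mem_iff] with x hx hxS
  rw [← Set.range_comp] at hxS
  exact htf x (hx.2 hxS)

end Selection

section StandardBorel

variable {X Y : Type*} [MeasurableSpace X] [StandardBorelSpace X] [MeasurableSpace Y]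
  [StandardBorelSpace Y] (m : Measure X) [SFinite m] {S : Set (X × Y)}

theorem exists_measurable_ae_selection [Nonempty Y] (hS : MeasurableSet S) :
    ∃ s : X → Y, Measurable s ∧ ∀ᵐ x ∂m, x ∈ Prod.fst '' S → (x, s x) ∈ S := by
  let _ := upgradeStandardBorel X
  let _ := upgradeStandardBorel Y
  exact exists_measurable_ae_selection_of_analyticSet m hS.analyticSet

theorem nullMeasurableSet_image_fst (hS : MeasurableSet S) :
    NullMeasurableSet (Prod.fst '' S) m := by
  let _ := upgradeStandardBorel X
  exact nullMeasurableSet_of_analyticSet m (hS.analyticSet_image measurable_fst)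

end StandardBorel

section SectionInfimum

variable {X Y : Type*} {Z : Set (X × Y)} {f : X × Y → ℝ}

/-- The set `{f(x, y) : y ∈ Z_x}` of values of `f` on the section `Z_x` of `Z`. -/
def sectionValues (Z : Set (X × Y)) (f : X × Y → ℝ) (x : X) : Set ℝ :=
  {r | ∃ y, (x, y) ∈ Z ∧ r = f (x, y)}

/-- The infimum `u(x) = inf_{y ∈ Z_x} f(x, y)`, the function `uλ` of the paper for `f = gλ`.
It is `0` at points where `Z_x` is empty or `f(x, ·)` is not bounded below on `Z_x`. -/
noncomputable def sectionInf (Z : Set (X × Y)) (f : X × Y → ℝ) (x : X) : ℝ :=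
  sInf (sectionValues Z f x)

theorem sectionValues_nonempty {x : X} (hx : ∃ y, (x, y) ∈ Z) : (sectionValues Z f x).Nonempty :=
  let ⟨y, hy⟩ := hx
  ⟨f (x, y), y, hy, rfl⟩

theorem sectionInf_lt_iff (hZne : ∀ x, ∃ y, (x, y) ∈ Z)
    (hbdd : ∀ x, BddBelow (sectionValues Z f x)) {x : X} {c : ℝ} :
    sectionInf Z f x < c ↔ ∃ y, (x, y) ∈ Z ∧ f (x, y) < c := by
  rw [sectionInf, csInf_lt_iff (hbdd x) (sectionValues_nonempty (hZne x))]
  constructor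
  · rintro ⟨_, ⟨y, hy, rfl⟩, hlt⟩
    exact ⟨y, hy, hlt⟩
  · rintro ⟨y, hy, hlt⟩
    exact ⟨_, ⟨y, hy, rfl⟩, hlt⟩

section Measurability

variable [MeasurableSpace X] [StandardBorelSpace X] [MeasurableSpace Y] [StandardBorelSpace Y]
  (m : Measure X) [SFinite m]

theorem aemeasurable_sectionInf (hZ : MeasurableSet Z) (hZne : ∀ x, ∃ y, (x, y) ∈ Z)
    (hf : Measurable f) (hbdd : ∀ x, BddBelow (sectionValues Z f x)) :
    AEMeasurable (sectionInf Z f) m := by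
  have hsublevel (c : ℝ) :
      sectionInf Z f ⁻¹' Set.Iio c = Prod.fst '' (Z ∩ f ⁻¹' Set.Iio c) := by
    ext x
    simp [sectionInf_lt_iff hZne hbdd]
  have hnullset (c : ℝ) : NullMeasurableSet (sectionInf Z f ⁻¹' Set.Iio c) m := by
    rw [hsublevel]
    exact nullMeasurableSet_image_fst m (hZ.inter (hf measurableSet_Iio))
  have hnull : NullMeasurable (sectionInf Z f) m :=
    measurable_of_Iio (δ := NullMeasurableSpace X m) hnullset
  exact hnull.aemeasurable

theorem exists_measurable_ae_near_minimizer [Nonempty Y] (hZ : MeasurableSet Z)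
    (hZne : ∀ x, ∃ y, (x, y) ∈ Z) (hf : Measurable f)
    (hbdd : ∀ x, BddBelow (sectionValues Z f x)) {ε : ℝ} (hε : 0 < ε) :
    ∃ s : X → Y, Measurable s ∧ ∀ᵐ x ∂m, (x, s x) ∈ Z ∧ f (x, s x) < sectionInf Z f x + ε := by
  have hu : AEMeasurable (sectionInf Z f) m := aemeasurable_sectionInf m hZ hZne hf hbdd
  have hS : MeasurableSet (Z ∩ {z | f z < hu.mk _ z.1 + ε}) :=
    hZ.inter (measurableSet_lt hf ((hu.measurable_mk.comp measurable_fst).add_const ε))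
  obtain ⟨s, hs, hsS⟩ := exists_measurable_ae_selection m hS
  refine ⟨s, hs, ?_⟩
  filter_upwards [hsS, hu.ae_eq_mk] with x hx hux
  obtain ⟨y, hy, hlt⟩ := (sectionInf_lt_iff hZne hbdd).1 (lt_add_of_pos_right (sectionInf Z f x) hε)
  rw [hux] at hlt ⊢
  exact hx ⟨(x, y), ⟨hy, hlt⟩, rfl⟩

end Measurability

variable {b : X → ℝ}

theorem bddBelow_sectionValues (hfb : ∀ z ∈ Z, |f z| ≤ b z.1) (x : X) :
    BddBelow (sectionValues Z f x) :=
  ⟨-b x, by rintro _ ⟨y, hy, rfl⟩; exact neg_le_of_abs_le (hfb (x, y) hy)⟩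

theorem sectionInf_le (hfb : ∀ z ∈ Z, |f z| ≤ b z.1) {z : X × Y} (hz : z ∈ Z) :
    sectionInf Z f z.1 ≤ f z :=
  csInf_le (bddBelow_sectionValues hfb z.1) ⟨z.2, hz, rfl⟩

theorem abs_sectionInf_le (hfb : ∀ z ∈ Z, |f z| ≤ b z.1) {x : X} (hx : ∃ y, (x, y) ∈ Z) :
    |sectionInf Z f x| ≤ b x := by
  have ⟨y, hy⟩ := hx
  refine abs_le.2 ⟨le_csInf (sectionValues_nonempty hx) ?_, ?_⟩
  · rintro _ ⟨y', hy', rfl⟩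
    exact neg_le_of_abs_le (hfb (x, y') hy')
  · exact (sectionInf_le hfb hy).trans (le_of_abs_le (hfb (x, y) hy))

end SectionInfimum

section Marginal

variable {X Y : Type*} [MeasurableSpace X] [MeasurableSpace Y] {m : Measure X} {Z : Set (X × Y)}

/-- The set `𝒫_m(Z)` of probability measures on `Z` with first marginal `m`, encoded as the
probability measures on `X × Y` for which the complement of `Z` is null. -/
def probMeasuresOn (m : Measure X) (Z : Set (X × Y)) : Set (Measure (X × Y)) :=
  {μ | IsProbabilityMeasure μ ∧ μ Zᶜ = 0 ∧ μ.map Prod.fst = m}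

theorem map_prodMk_mem_probMeasuresOn [IsProbabilityMeasure m] (hZ : MeasurableSet Z) {s : X → Y}
    (hs : Measurable s) (hsZ : ∀ᵐ x ∂m, (x, s x) ∈ Z) :
    m.map (fun x => (x, s x)) ∈ probMeasuresOn m Z := by
  have hgraph : Measurable fun x => (x, s x) := measurable_id.prodMk hs
  refine ⟨Measure.isProbabilityMeasure_map hgraph.aemeasurable, ?_, ?_⟩
  · rw [Measure.map_apply hgraph hZ.compl]
    exact hsZ
  · rw [Measure.map_map measurable_fst hgraph]
    exact Measure.map_id

variable {f : X × Y → ℝ} {b : X → ℝ} {μ : Measure (X × Y)}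

theorem integrable_of_mem_probMeasuresOn (hf : Measurable f) (hb : Integrable b m)
    (hfb : ∀ z ∈ Z, |f z| ≤ b z.1) (hμ : μ ∈ probMeasuresOn m Z) : Integrable f μ := by
  obtain ⟨-, hμZ, rfl⟩ := hμ
  refine (hb.comp_measurable measurable_fst).mono' hf.aestronglyMeasurable ?_
  filter_upwards [show ∀ᵐ z ∂μ, z ∈ Z from hμZ] with z hz using hfb z hz

variable [StandardBorelSpace X] [StandardBorelSpace Y]

theorem integrable_sectionInf [SFinite m] (hZ : MeasurableSet Z) (hZne : ∀ x, ∃ y, (x, y) ∈ Z)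
    (hf : Measurable f) (hb : Integrable b m) (hfb : ∀ z ∈ Z, |f z| ≤ b z.1) :
    Integrable (sectionInf Z f) m :=
  hb.mono'
    (aemeasurable_sectionInf m hZ hZne hf (bddBelow_sectionValues hfb)).aestronglyMeasurable
    (ae_of_all m fun x => abs_sectionInf_le hfb (hZne x))

theorem integral_sectionInf_le_integral [SFinite m] (hZ : MeasurableSet Z)
    (hZne : ∀ x, ∃ y, (x, y) ∈ Z) (hf : Measurable f) (hb : Integrable b m)
    (hfb : ∀ z ∈ Z, |f z| ≤ b z.1) (hμ : μ ∈ probMeasuresOn m Z) :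
    ∫ x, sectionInf Z f x ∂m ≤ ∫ z, f z ∂μ := by
  have hu : Integrable (sectionInf Z f) m := integrable_sectionInf hZ hZne hf hb hfb
  have hfμ : Integrable f μ := integrable_of_mem_probMeasuresOn hf hb hfb hμ
  obtain ⟨-, hμZ, rfl⟩ := hμ
  rw [integral_map measurable_fst.aemeasurable hu.aestronglyMeasurable]
  refine integral_mono_ae (hu.comp_measurable measurable_fst) hfμ ?_
  filter_upwards [show ∀ᵐ z ∂μ, z ∈ Z from hμZ] with z hz using sectionInf_le hfb hz

theorem exists_integral_le_integral_sectionInf_add [IsProbabilityMeasure m] [Nonempty Y]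
    (hZ : MeasurableSet Z) (hZne : ∀ x, ∃ y, (x, y) ∈ Z) (hf : Measurable f) (hb : Integrable b m)
    (hfb : ∀ z ∈ Z, |f z| ≤ b z.1) {ε : ℝ} (hε : 0 < ε) :
    ∃ μ ∈ probMeasuresOn m Z, ∫ z, f z ∂μ ≤ ∫ x, sectionInf Z f x ∂m + ε := by
  obtain ⟨s, hs, hsopt⟩ :=
    exists_measurable_ae_near_minimizer m hZ hZne hf (bddBelow_sectionValues hfb) hε
  have hgraph : Measurable fun x => (x, s x) := measurable_id.prodMk hs
  have hμ : m.map (fun x => (x, s x)) ∈ probMeasuresOn m Z :=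
    map_prodMk_mem_probMeasuresOn hZ hs (hsopt.mono fun _ hx => hx.1)
  have hfs : Integrable (fun x => f (x, s x)) m :=
    (integrable_of_mem_probMeasuresOn hf hb hfb hμ).comp_measurable hgraph
  have hu : Integrable (sectionInf Z f) m := integrable_sectionInf hZ hZne hf hb hfb
  refine ⟨_, hμ, ?_⟩
  calc ∫ z, f z ∂m.map (fun x => (x, s x)) = ∫ x, f (x, s x) ∂m :=
        integral_map hgraph.aemeasurable hf.aestronglyMeasurable
    _ ≤ ∫ x, (sectionInf Z f x + ε) ∂m :=
        integral_mono_ae hfs (hu.add (integrable_const ε)) (hsopt.mono fun _ hx => hx.2.le)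
    _ = ∫ x, sectionInf Z f x ∂m + ε := by
        rw [integral_add hu (integrable_const ε), integral_const, probReal_univ, one_smul]

end Marginal

theorem stmt_8_general {X Y : Type*} [MeasurableSpace X] [StandardBorelSpace X]
    [MeasurableSpace Y] [StandardBorelSpace Y] {Z : Set (X × Y)} (hZ : MeasurableSet Z)
    (hZne : ∀ x, ∃ y, (x, y) ∈ Z) {f : X × Y → ℝ} (hf : Measurable f) {m : Measure X}
    [IsProbabilityMeasure m] {b : X → ℝ} (hb : Integrable b m) (hfb : ∀ z ∈ Z, |f z| ≤ b z.1) :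
    sInf ((fun μ => ∫ z, f z ∂μ) '' probMeasuresOn m Z) = ∫ x, sectionInf Z f x ∂m := by
  obtain ⟨x⟩ : Nonempty X := m.nonempty_of_neZero
  have : Nonempty Y := (hZne x).nonempty
  have hnear (ε : ℝ) (hε : 0 < ε) :
      ∃ μ ∈ probMeasuresOn m Z, ∫ z, f z ∂μ ≤ ∫ x, sectionInf Z f x ∂m + ε :=
    exists_integral_le_integral_sectionInf_add hZ hZne hf hb hfb hε
  obtain ⟨μ, hμ, -⟩ := hnear 1 one_pos
  refine IsGLB.csInf_eq ⟨?_, fun c hc => ?_⟩ ⟨_, μ, hμ, rfl⟩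
  · rintro _ ⟨μ, hμ, rfl⟩
    exact integral_sectionInf_le_integral hZ hZne hf hb hfb hμ
  · refine le_of_forall_pos_le_add fun ε hε => ?_
    obtain ⟨ν, hν, hle⟩ := hnear ε hε
    exact (hc ⟨ν, hν, rfl⟩).trans hle

/-- For any Borel probability marginal `m`, the infimum of `∫ gλ dμ` over probability
measures on `Z` with first marginal `m` equals `∫ uλ dm`, where
`uλ(x) = inf_{y ∈ Z_x} ⟨λ, g(x,y)⟩`. -/
theorem stmt_8 {X Y H : Type*}
    [MetricSpace X] [CompleteSpace X] [SecondCountableTopology X]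
    [MeasurableSpace X] [BorelSpace X]
    [MetricSpace Y] [CompleteSpace Y] [SecondCountableTopology Y]
    [MeasurableSpace Y] [BorelSpace Y]
    [NormedAddCommGroup H] [InnerProductSpace ℝ H]
    [MeasurableSpace H] [BorelSpace H]
    (Z : Set (X × Y)) (hZc : IsClosed Z) (hZne : ∀ x : X, ∃ y, (x, y) ∈ Z)
    (g : X × Y → H) (hgm : Measurable g) (M : ℝ) (hM : ∀ z, ‖g z‖ ≤ M)
    (lam : H)
    (hlsc : LowerSemicontinuousOn (fun z => ⟪lam, g z⟫) Z)
    (hG : ∀ x y, (x, y) ∈ Z → ∀ xn : ℕ → X, Tendsto xn atTop (𝓝 x) →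
      ∃ yn : ℕ → Y, (∀ n, (xn n, yn n) ∈ Z) ∧
        Tendsto (fun n => ⟪lam, g (xn n, yn n)⟫) atTop (𝓝 ⟪lam, g (x, y)⟫))
    (hBR : ∀ x : X, ∃ y, (x, y) ∈ Z ∧
      ∀ y', (x, y') ∈ Z → ⟪lam, g (x, y)⟫ ≤ ⟪lam, g (x, y')⟫)
    (u : X → ℝ) (hu : ∀ x, u x = sInf {r | ∃ y, (x, y) ∈ Z ∧ r = ⟪lam, g (x, y)⟫})
    (m : Measure X) [IsProbabilityMeasure m]
    (A : Set (Measure (X × Y)))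
    (hA : A = {μ | IsProbabilityMeasure μ ∧ μ Zᶜ = 0 ∧ μ.map Prod.fst = m}) :
    sInf ((fun μ => ∫ z, ⟪lam, g z⟫ ∂μ) '' A) = ∫ x, u x ∂m := by
  obtain rfl : u = sectionInf Z (fun z => ⟪lam, g z⟫) := funext hu
  have hbound (z : X × Y) : |⟪lam, g z⟫| ≤ ‖lam‖ * M :=
    (abs_real_inner_le_norm _ _).trans (mul_le_mul_of_nonneg_left (hM z) (norm_nonneg lam))
  exact hA ▸ stmt_8_general hZc.measurableSet hZne
    ((innerSL ℝ lam).continuous.measurable.comp hgm) (integrable_const (‖lam‖ * M))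
    fun z _ => hbound z
end

section
/- Under the same assumptions, let V(m) = inf_{μ ∈ 𝒫_m(Z)} f(∫_Z g dμ) denote the value function. Then for all m₀, m₁ ∈ 𝒫¹(X): |V(m₀) − V(m₁)| ≤ L_g (C + L M) d₁(m₀, m₁), where d₁ is the Kantorovich–Rubinstein distance. -/
open MeasureTheory
open scoped RealInnerProductSpace ENNReal NNReal

/-!
For each marginal `m` the attainable aggregates `∫ g dμ`, `μ ∈ 𝒫_m(Z)`, form a convex set `A(m)`,
and `V(m)` is the infimum of `f` over `A(m)`. Let `h = ∫ g dμ₀` with `μ₀ ∈ 𝒫_{m₀}(Z)`. By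
Hahn–Banach, `h` is within `L_g d₁(m₀, m₁)` of `A(m₁)` as soon as for each linear functional `φ`
some `μ₁ ∈ 𝒫_{m₁}(Z)` satisfies `φ (∫ g dμ₁) ≤ φ h + ‖φ‖ L_g d₁(m₀, m₁)`. Take for `μ₁` the image
of `m₁` under a measurable selection of the fibrewise minimizers of `φ ∘ g`: the fibrewise minimum
is a `‖φ‖ L_g`-Lipschitz function of `x`, its `m₁`-integral is `φ (∫ g dμ₁)`, and its `m₀`-integral
is at most `φ h`. Finally the subgradient inequality at the points of `A(m₁)`, where the gradient
of `f` is bounded by `C`, turns the distance estimate into `V(m₁) ≤ f h + L_g C d₁(m₀, m₁)`.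
-/

section MeasurableSelection

variable {E Y : Type*}

/-- The part of the graph `A ⊆ E × Y` of a correspondence on which `ψ` attains its minimum over
the fibre. -/
def fiberArgmin (A : Set (E × Y)) (ψ : E × Y → ℝ) : Set (E × Y) :=
  {z ∈ A | ∀ y, (z.1, y) ∈ A → ψ z ≤ ψ (z.1, y)}

/-- The graphs of compact-valued measurable correspondences `E ⇉ Y`, in the form the selection
theorem needs. Measurability is tested on closed subsets of `E × Y` rather than of `Y`, so that it
passes to fibrewise minimizers of functions of both variables. -/
structure IsMeasurableCompactGraph [TopologicalSpace E] [MeasurableSpace E] [TopologicalSpace Y]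
    (A : Set (E × Y)) : Prop where
  isCompact_section (x : E) : IsCompact (Prod.mk x ⁻¹' A)
  measurableSet_fst_image_inter {G : Set (E × Y)} (hG : IsClosed G) :
    MeasurableSet (Prod.fst '' (A ∩ G))

theorem mem_fst_image_iff {A : Set (E × Y)} {x : E} : x ∈ Prod.fst '' A ↔ ∃ y, (x, y) ∈ A := by
  simp

theorem fiberArgmin_subset (A : Set (E × Y)) (ψ : E × Y → ℝ) : fiberArgmin A ψ ⊆ A :=
  fun _ hz => hz.1

/-- Successive fibrewise minimization of `ψ 0`, `ψ 1`, …: a lexicographic argmin of which only the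
first `n` criteria have been applied. -/
def iteratedFiberArgmin (A : Set (E × Y)) (ψ : ℕ → E × Y → ℝ) : ℕ → Set (E × Y)
  | 0 => A
  | n + 1 => fiberArgmin (iteratedFiberArgmin A ψ n) (ψ n)

theorem iteratedFiberArgmin_succ_subset (A : Set (E × Y)) (ψ : ℕ → E × Y → ℝ) (n : ℕ) :
    iteratedFiberArgmin A ψ (n + 1) ⊆ iteratedFiberArgmin A ψ n :=
  fiberArgmin_subset _ _

theorem eq_of_mem_iInter_iteratedFiberArgmin {A : Set (E × Y)} {ψ : ℕ → E × Y → ℝ}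
    {x : E} {y y' : Y} (hy : (x, y) ∈ ⋂ n, iteratedFiberArgmin A ψ n)
    (hy' : (x, y') ∈ ⋂ n, iteratedFiberArgmin A ψ n) (n : ℕ) : ψ n (x, y) = ψ n (x, y') := by
  rw [Set.mem_iInter] at hy hy'
  exact le_antisymm ((hy (n + 1)).2 y' (hy' n)) ((hy' (n + 1)).2 y (hy n))

variable [TopologicalSpace E] [TopologicalSpace Y]

theorem fst_image_fiberArgmin {A : Set (E × Y)} {ψ : E × Y → ℝ}
    (hA : ∀ x, IsCompact (Prod.mk x ⁻¹' A)) (hψ : Continuous ψ) :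
    Prod.fst '' fiberArgmin A ψ = Prod.fst '' A := by
  refine (Set.image_mono (fiberArgmin_subset A ψ)).antisymm fun x hx => ?_
  have hcont : Continuous fun y => ψ (x, y) := by fun_prop
  obtain ⟨y, hy, hmin⟩ := (hA x).exists_isMinOn (mem_fst_image_iff.1 hx) hcont.continuousOn
  exact mem_fst_image_iff.2 ⟨y, hy, fun _ hy' => hmin hy'⟩

theorem isCompact_section_inter {A G : Set (E × Y)} (hA : ∀ x, IsCompact (Prod.mk x ⁻¹' A))
    (hG : IsClosed G) (x : E) : IsCompact (Prod.mk x ⁻¹' (A ∩ G)) :=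
  (hA x).inter_right (hG.preimage (Continuous.prodMk_right x))

theorem isCompact_section_fiberArgmin {A : Set (E × Y)} {ψ : E × Y → ℝ}
    (hA : ∀ x, IsCompact (Prod.mk x ⁻¹' A)) (hψ : Continuous ψ) (x : E) :
    IsCompact (Prod.mk x ⁻¹' fiberArgmin A ψ) := by
  have hinter : Prod.mk x ⁻¹' fiberArgmin A ψ =
      Prod.mk x ⁻¹' A ∩ ⋂ y' ∈ Prod.mk x ⁻¹' A, {y | ψ (x, y) ≤ ψ (x, y')} := by
    ext y
    simp [fiberArgmin]
  rw [hinter]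
  exact (hA x).inter_right <|
    isClosed_biInter fun _ _ => isClosed_le (by fun_prop) (by fun_prop)

theorem fst_image_iInter_inter [T2Space Y] {B : ℕ → Set (E × Y)}
    (hB : ∀ n x, IsCompact (Prod.mk x ⁻¹' B n)) (hanti : ∀ n, B (n + 1) ⊆ B n)
    {G : Set (E × Y)} (hG : IsClosed G) :
    Prod.fst '' ((⋂ n, B n) ∩ G) = ⋂ n, Prod.fst '' (B n ∩ G) := by
  refine Set.Subset.antisymm (Set.subset_iInter fun n => Set.image_mono <|
    Set.inter_subset_inter_left G (Set.iInter_subset B n)) fun x hx => ?_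
  have hcompact (n : ℕ) := isCompact_section_inter (hB n) hG x
  obtain ⟨y, hy⟩ := IsCompact.nonempty_iInter_of_sequence_nonempty_isCompact_isClosed
    (fun n => Prod.mk x ⁻¹' (B n ∩ G))
    (fun n => Set.preimage_mono (Set.inter_subset_inter_left G (hanti n)))
    (fun n => mem_fst_image_iff.1 (Set.mem_iInter.1 hx n)) (hcompact 0)
    (fun n => (hcompact n).isClosed)
  simp only [Set.mem_iInter] at hy
  exact ⟨_, ⟨Set.mem_iInter.2 fun n => (hy n).1, (hy 0).2⟩, rfl⟩

/-- Testing rational levels `c` is enough because the fibres of `A ∩ G` are compact, so that `ψ`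
attains its infimum over them. -/
theorem fst_image_fiberArgmin_inter {A G : Set (E × Y)} {ψ : E × Y → ℝ}
    (hA : ∀ x, IsCompact (Prod.mk x ⁻¹' A)) (hψ : Continuous ψ) (hG : IsClosed G) :
    Prod.fst '' (fiberArgmin A ψ ∩ G) = Prod.fst '' A ∩
      ⋂ c : ℚ, (Prod.fst '' (A ∩ {z | ψ z ≤ c}))ᶜ ∪ Prod.fst '' (A ∩ (G ∩ {z | ψ z ≤ c})) := by
  ext x
  simp only [Set.mem_inter_iff, Set.mem_iInter, Set.mem_union, Set.mem_compl_iff,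
    ← imp_iff_not_or]
  constructor
  · rintro ⟨⟨x, y⟩, ⟨⟨hyA, hmin⟩, hyG⟩, rfl⟩
    refine ⟨⟨_, hyA, rfl⟩, ?_⟩
    rintro c ⟨⟨_, y'⟩, ⟨hy'A, hy'c⟩, rfl⟩
    exact ⟨_, ⟨hyA, hyG, (hmin y' hy'A).trans hy'c⟩, rfl⟩
  · rintro ⟨hxA, hlevel⟩
    obtain ⟨y₀, hy₀A, hmin₀⟩ := mem_fst_image_iff.1 ((fst_image_fiberArgmin hA hψ).ge hxA)
    have hG_level (c : ℚ) (hc : ψ (x, y₀) < c) : ∃ y, (x, y) ∈ A ∩ G ∧ ψ (x, y) ≤ c := by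
      obtain ⟨y, hyA, hyG, hyc⟩ := mem_fst_image_iff.1 (hlevel c ⟨_, ⟨hy₀A, hc.le⟩, rfl⟩)
      exact ⟨y, ⟨hyA, hyG⟩, hyc⟩
    have hxAG : x ∈ Prod.fst '' (A ∩ G) := by
      obtain ⟨c, hc⟩ := exists_rat_gt (ψ (x, y₀))
      obtain ⟨y, hy, -⟩ := hG_level c hc
      exact ⟨_, hy, rfl⟩
    obtain ⟨y₁, ⟨hy₁A, hy₁G⟩, hmin₁⟩ := mem_fst_image_iff.1
      ((fst_image_fiberArgmin (isCompact_section_inter hA hG) hψ).ge hxAG)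
    have hle : ψ (x, y₁) ≤ ψ (x, y₀) := le_of_forall_lt_rat_imp_le fun c hc => by
      obtain ⟨y, hy, hyc⟩ := hG_level c hc
      exact (hmin₁ y hy).trans hyc
    exact ⟨_, ⟨⟨hy₁A, fun y hy => hle.trans (hmin₀ y hy)⟩, hy₁G⟩, rfl⟩

theorem upperHemicontinuousOn_of_forall_exists_dist_lt {E : Type*} [PseudoMetricSpace E]
    {Φ : E → Set Y} {S : Set E}
    (hΦ : ∀ x ∈ S, ∀ U : Set Y, IsOpen U → Φ x ⊆ U →
      ∃ η > (0 : ℝ), ∀ x' ∈ S, dist x x' < η → Φ x' ⊆ U) :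
    UpperHemicontinuousOn Φ S :=
  .of_forall_isOpen fun x hx U hU hxU => by
    obtain ⟨η, hη, hη_sub⟩ := hΦ x hx U hU hxU
    filter_upwards [self_mem_nhdsWithin, mem_nhdsWithin_of_mem_nhds (Metric.ball_mem_nhds x hη)]
      with x' hx' hx'η using hη_sub x' hx' (Metric.mem_ball'.1 hx'η)

theorem isClosed_fst_image_inter {A G : Set (E × Y)} (hdom : IsClosed (Prod.fst '' A))
    (hA : ∀ x, IsCompact (Prod.mk x ⁻¹' A))
    (husc : UpperHemicontinuousOn (fun x => Prod.mk x ⁻¹' A) (Prod.fst '' A)) (hG : IsClosed G) :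
    IsClosed (Prod.fst '' (A ∩ G)) := by
  rw [← isOpen_compl_iff, isOpen_iff_mem_nhds]
  intro x hx
  by_cases hxA : x ∈ Prod.fst '' A
  · have hdisj : {x} ×ˢ (Prod.mk x ⁻¹' A) ⊆ Gᶜ := by
      rintro ⟨_, y⟩ ⟨rfl, hyA⟩ hyG
      exact hx ⟨_, ⟨hyA, hyG⟩, rfl⟩
    obtain ⟨u, v, hu, hv, hxu, hAv, huv⟩ :=
      generalized_tube_lemma isCompact_singleton (hA x) hG.isOpen_compl hdisj
    have hsec := eventually_nhdsWithin_iff.1 (husc.forall_isOpen x hxA v hv hAv)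
    filter_upwards [hu.mem_nhds (hxu rfl), hsec] with x' hx'u hx'v
    rintro ⟨⟨_, y⟩, ⟨hyA, hyG⟩, rfl⟩
    exact huv ⟨hx'u, hx'v ⟨_, hyA, rfl⟩ hyA⟩ hyG
  · filter_upwards [hdom.isOpen_compl.mem_nhds hxA] with x' hx' hx'G
    exact hx' (Set.image_mono Set.inter_subset_left hx'G)

namespace IsMeasurableCompactGraph

variable [MeasurableSpace E] {A : Set (E × Y)}

theorem of_upperHemicontinuousOn [OpensMeasurableSpace E] (hdom : IsClosed (Prod.fst '' A))
    (hA : ∀ x ∈ Prod.fst '' A, IsCompact (Prod.mk x ⁻¹' A))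
    (husc : UpperHemicontinuousOn (fun x => Prod.mk x ⁻¹' A) (Prod.fst '' A)) :
    IsMeasurableCompactGraph A := by
  have hcompact (x : E) : IsCompact (Prod.mk x ⁻¹' A) := by
    by_cases hx : x ∈ Prod.fst '' A
    · exact hA x hx
    · have hempty : Prod.mk x ⁻¹' A = ∅ :=
        Set.eq_empty_of_forall_notMem fun y hy => hx ⟨_, hy, rfl⟩
      exact hempty ▸ isCompact_empty
  exact ⟨hcompact, fun hG => (isClosed_fst_image_inter hdom hcompact husc hG).measurableSet⟩

theorem measurableSet_fst_image (hA : IsMeasurableCompactGraph A) :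
    MeasurableSet (Prod.fst '' A) := by
  simpa only [Set.inter_univ] using hA.measurableSet_fst_image_inter isClosed_univ

theorem fiberArgmin (hA : IsMeasurableCompactGraph A) {ψ : E × Y → ℝ} (hψ : Continuous ψ) :
    IsMeasurableCompactGraph (fiberArgmin A ψ) where
  isCompact_section := isCompact_section_fiberArgmin hA.isCompact_section hψ
  measurableSet_fst_image_inter hG := by
    rw [fst_image_fiberArgmin_inter hA.isCompact_section hψ hG]
    have hsublevel (c : ℚ) : IsClosed {z | ψ z ≤ c} := isClosed_le hψ continuous_const
    exact hA.measurableSet_fst_image.inter <| .iInter fun c =>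
      (hA.measurableSet_fst_image_inter (hsublevel c)).compl.union
        (hA.measurableSet_fst_image_inter (hG.inter (hsublevel c)))

theorem iInter [T2Space Y] {B : ℕ → Set (E × Y)} (hB : ∀ n, IsMeasurableCompactGraph (B n))
    (hanti : ∀ n, B (n + 1) ⊆ B n) : IsMeasurableCompactGraph (⋂ n, B n) where
  isCompact_section x := by
    rw [Set.preimage_iInter]
    exact ((hB 0).isCompact_section x).of_isClosed_subset
      (isClosed_iInter fun n => ((hB n).isCompact_section x).isClosed) (Set.iInter_subset _ 0)
  measurableSet_fst_image_inter hG := by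
    rw [fst_image_iInter_inter (fun n => (hB n).isCompact_section) hanti hG]
    exact .iInter fun n => (hB n).measurableSet_fst_image_inter hG

theorem exists_measurable_selection_of_subsingleton [TopologicalSpace.PseudoMetrizableSpace Y]
    [MeasurableSpace Y] [BorelSpace Y] [Nonempty Y] (hA : IsMeasurableCompactGraph A)
    (hsub : ∀ x, (Prod.mk x ⁻¹' A).Subsingleton) :
    ∃ s : E → Y, Measurable s ∧ ∀ x ∈ Prod.fst '' A, (x, s x) ∈ A := by
  have hpoint (x : E) : ∃ y, (x ∈ Prod.fst '' A → (x, y) ∈ A) ∧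
      (x ∉ Prod.fst '' A → y = Classical.arbitrary Y) := by
    by_cases hx : x ∈ Prod.fst '' A
    · obtain ⟨y, hy⟩ := mem_fst_image_iff.1 hx
      exact ⟨y, fun _ => hy, absurd hx⟩
    · exact ⟨_, fun h => absurd h hx, fun _ => rfl⟩
  choose s hs hs_off using hpoint
  refine ⟨s, measurable_of_isClosed fun F hF => ?_, hs⟩
  have hpreimage : s ⁻¹' F = Prod.fst '' (A ∩ Prod.snd ⁻¹' F) ∪
      ((Prod.fst '' A)ᶜ ∩ {_x | Classical.arbitrary Y ∈ F}) := by
    refine Set.Subset.antisymm (fun x hxF => ?_) (Set.union_subset ?_ ?_)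
    · by_cases hx : x ∈ Prod.fst '' A
      · exact .inl ⟨_, ⟨hs x hx, hxF⟩, rfl⟩
      · exact .inr ⟨hx, (hs_off x hx).subst hxF⟩
    · rintro _ ⟨⟨x, y⟩, ⟨hyA, hyF⟩, rfl⟩
      have hsy : s x = y := hsub x (hs x ⟨_, hyA, rfl⟩) hyA
      exact hsy.symm.subst (motive := (· ∈ F)) hyF
    · rintro x ⟨hx, hF⟩
      exact (hs_off x hx).symm.subst (motive := (· ∈ F)) hF
  rw [hpreimage]
  exact (hA.measurableSet_fst_image_inter (hF.preimage continuous_snd)).union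
    (hA.measurableSet_fst_image.compl.inter (.const _))

end IsMeasurableCompactGraph

theorem isCompact_section_iteratedFiberArgmin {A : Set (E × Y)}
    (hA : ∀ x, IsCompact (Prod.mk x ⁻¹' A)) {ψ : ℕ → E × Y → ℝ} (hψ : ∀ n, Continuous (ψ n))
    (n : ℕ) : ∀ x, IsCompact (Prod.mk x ⁻¹' iteratedFiberArgmin A ψ n) := by
  induction n with
  | zero => exact hA
  | succ n ih => exact isCompact_section_fiberArgmin ih (hψ n)

theorem fst_image_iteratedFiberArgmin {A : Set (E × Y)} (hA : ∀ x, IsCompact (Prod.mk x ⁻¹' A))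
    {ψ : ℕ → E × Y → ℝ} (hψ : ∀ n, Continuous (ψ n)) (n : ℕ) :
    Prod.fst '' iteratedFiberArgmin A ψ n = Prod.fst '' A := by
  induction n with
  | zero => rfl
  | succ n ih =>
    exact (fst_image_fiberArgmin (isCompact_section_iteratedFiberArgmin hA hψ n) (hψ n)).trans ih

theorem IsMeasurableCompactGraph.iteratedFiberArgmin [MeasurableSpace E] {A : Set (E × Y)}
    (hA : IsMeasurableCompactGraph A) {ψ : ℕ → E × Y → ℝ}
    (hψ : ∀ n, Continuous (ψ n)) (n : ℕ) :
    IsMeasurableCompactGraph (iteratedFiberArgmin A ψ n) := by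
  induction n with
  | zero => exact hA
  | succ n ih => exact ih.fiberArgmin (hψ n)

end MeasurableSelection

/-- Minimizing the distances to a dense sequence one after the other leaves a single point in each
fibre, since a point is determined by its distances to a dense set. -/
theorem IsMeasurableCompactGraph.exists_measurable_selection {E Y : Type*} [TopologicalSpace E]
    [MeasurableSpace E] [MetricSpace Y] [TopologicalSpace.SeparableSpace Y] [MeasurableSpace Y]
    [BorelSpace Y] [Nonempty Y] {A : Set (E × Y)} (hA : IsMeasurableCompactGraph A) :
    ∃ s : E → Y, Measurable s ∧ ∀ x ∈ Prod.fst '' A, (x, s x) ∈ A := by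
  let d := TopologicalSpace.denseSeq Y
  let B := _root_.iteratedFiberArgmin A fun n z => dist z.2 (d n)
  have hcont (n : ℕ) : Continuous fun z : E × Y => dist z.2 (d n) := by fun_prop
  have hB (n : ℕ) : IsMeasurableCompactGraph (B n) := hA.iteratedFiberArgmin hcont n
  have hanti (n : ℕ) : B (n + 1) ⊆ B n := iteratedFiberArgmin_succ_subset _ _ n
  have hsub (x : E) : (Prod.mk x ⁻¹' ⋂ n, B n).Subsingleton := fun y hy y' hy' => by
    have hdist : (dist y ·) = (dist y' ·) :=
      (TopologicalSpace.denseRange_denseSeq Y).equalizer (by fun_prop) (by fun_prop) <|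
        funext (eq_of_mem_iInter_iteratedFiberArgmin hy hy')
    exact dist_eq_zero.1 ((congrFun hdist y').trans (dist_self y'))
  have hdom : Prod.fst '' (⋂ n, B n) = Prod.fst '' A := by
    simpa only [Set.inter_univ, B, fst_image_iteratedFiberArgmin hA.isCompact_section hcont,
      Set.iInter_const] using
      fst_image_iInter_inter (fun n => (hB n).isCompact_section) hanti isClosed_univ
  obtain ⟨s, hs, hsB⟩ := (iInter hB hanti).exists_measurable_selection_of_subsingleton hsub
  exact ⟨s, hs, fun x hx => Set.mem_iInter.1 (hsB x (hdom.ge hx)) 0⟩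

section KantorovichRubinstein

variable {E : Type*} [PseudoMetricSpace E] [MeasurableSpace E]

/-- Membership of `m` in the Wasserstein space `𝒫¹(E)`, for a probability measure `m`. -/
def HasFiniteFirstMoment (m : Measure E) : Prop :=
  ∃ x₀ : E, Integrable (fun x => dist x x₀) m

/-- The Kantorovich–Rubinstein distance `d₁`, in its dual form. The supremum is finite when both
measures have a finite first moment; otherwise it may be the junk value `0`. -/
noncomputable def krDist (m₀ m₁ : Measure E) : ℝ :=
  sSup {r | ∃ F : E → ℝ, LipschitzWith 1 F ∧ r = ∫ x, F x ∂m₀ - ∫ x, F x ∂m₁}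

theorem krDist_nonneg (m₀ m₁ : Measure E) : 0 ≤ krDist m₀ m₁ :=
  Real.sSup_nonneg' ⟨0, ⟨0, LipschitzWith.const' 0, by simp⟩, le_rfl⟩

theorem krDist_comm (m₀ m₁ : Measure E) : krDist m₀ m₁ = krDist m₁ m₀ := by
  have hsubset (m m' : Measure E) :
      {r | ∃ F : E → ℝ, LipschitzWith 1 F ∧ r = ∫ x, F x ∂m - ∫ x, F x ∂m'} ⊆
        {r | ∃ F : E → ℝ, LipschitzWith 1 F ∧ r = ∫ x, F x ∂m' - ∫ x, F x ∂m} := by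
    rintro _ ⟨F, hF, rfl⟩
    exact ⟨-F, hF.neg, by simp only [Pi.neg_apply, integral_neg]; ring⟩
  exact congrArg sSup ((hsubset m₀ m₁).antisymm (hsubset m₁ m₀))

variable [OpensMeasurableSpace E] {m m₀ m₁ : Measure E} {F : E → ℝ} {K : ℝ≥0}

theorem integrable_of_lipschitzWith [IsFiniteMeasure m] (hF : LipschitzWith K F)
    (hm : HasFiniteFirstMoment m) : Integrable F m := by
  obtain ⟨x₀, hx₀⟩ := hm
  refine ((integrable_const |F x₀|).add (hx₀.const_mul K)).mono'
    hF.continuous.aestronglyMeasurable (.of_forall fun x => ?_)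
  calc |F x| ≤ |F x₀| + |F x - F x₀| := by linarith [abs_sub_abs_le_abs_sub (F x) (F x₀)]
    _ ≤ |F x₀| + K * dist x x₀ := by gcongr; exact hF.dist_le_mul x x₀

theorem abs_integral_sub_apply_le [IsProbabilityMeasure m] (hm : HasFiniteFirstMoment m)
    (hF : LipschitzWith 1 F) (a : E) : |∫ x, F x ∂m - F a| ≤ ∫ x, dist x a ∂m := by
  have hcenter : ∫ x, F x ∂m - F a = ∫ x, (F x - F a) ∂m := by
    rw [integral_sub (integrable_of_lipschitzWith hF hm) (integrable_const _)]
    simp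
  rw [hcenter, ← Real.norm_eq_abs]
  refine norm_integral_le_of_norm_le
    (integrable_of_lipschitzWith (LipschitzWith.dist_left a) hm) (.of_forall fun x => ?_)
  simpa [Real.dist_eq] using hF.dist_le_mul x a

variable [IsProbabilityMeasure m₀] [IsProbabilityMeasure m₁]

theorem bddAbove_krDist (hm₀ : HasFiniteFirstMoment m₀) (hm₁ : HasFiniteFirstMoment m₁) :
    BddAbove {r | ∃ F : E → ℝ, LipschitzWith 1 F ∧ r = ∫ x, F x ∂m₀ - ∫ x, F x ∂m₁} := by
  have ⟨a, _⟩ := hm₀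
  refine ⟨∫ x, dist x a ∂m₀ + ∫ x, dist x a ∂m₁, ?_⟩
  rintro _ ⟨F, hF, rfl⟩
  have h₀ := (abs_le.1 (abs_integral_sub_apply_le hm₀ hF a)).2
  have h₁ := (abs_le.1 (abs_integral_sub_apply_le hm₁ hF a)).1
  linarith

theorem integral_sub_integral_le_mul_krDist (hm₀ : HasFiniteFirstMoment m₀)
    (hm₁ : HasFiniteFirstMoment m₁) (hF : LipschitzWith K F) :
    ∫ x, F x ∂m₀ - ∫ x, F x ∂m₁ ≤ K * krDist m₀ m₁ := by
  obtain rfl | hK := eq_or_ne K 0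
  · obtain ⟨a, -⟩ := hm₀
    have hconst : F = fun _ => F a := funext fun x => dist_le_zero.1 <| by
      simpa using hF.dist_le_mul x a
    rw [hconst]
    simp
  · have hscaled : LipschitzWith 1 fun x => (K : ℝ)⁻¹ * F x := by
      simpa [hK, Function.comp_def] using (lipschitzWith_smul (K : ℝ)⁻¹).comp hF
    have hle : (K : ℝ)⁻¹ * (∫ x, F x ∂m₀ - ∫ x, F x ∂m₁) ≤ krDist m₀ m₁ :=
      le_csSup (bddAbove_krDist hm₀ hm₁)
        ⟨_, hscaled, by rw [integral_const_mul, integral_const_mul, mul_sub]⟩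
    rwa [inv_mul_le_iff₀ (by positivity)] at hle

end KantorovichRubinstein

section Bridging

variable {E Y : Type*} [MeasurableSpace E] [MeasurableSpace Y]

/-- The set `𝒫_m(Z)` of probability measures carried by `Z` whose first marginal is `m`. -/
def feasibleMeasures (Z : Set (E × Y)) (m : Measure E) : Set (Measure (E × Y)) :=
  {μ | IsProbabilityMeasure μ ∧ μ Zᶜ = 0 ∧ μ.map Prod.fst = m}

theorem map_graph_mem_feasibleMeasures {Z : Set (E × Y)} (hZ : MeasurableSet Z) {m : Measure E}
    [IsProbabilityMeasure m] {s : E → Y} (hs : Measurable s) (hsZ : ∀ᵐ x ∂m, (x, s x) ∈ Z) :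
    m.map (fun x => (x, s x)) ∈ feasibleMeasures Z m := by
  have hgraph : Measurable fun x => (x, s x) := measurable_id.prodMk hs
  refine ⟨Measure.isProbabilityMeasure_map hgraph.aemeasurable, ?_, ?_⟩
  · exact (ae_map_iff hgraph.aemeasurable hZ).2 hsZ
  · rw [Measure.map_map measurable_fst hgraph]
    exact Measure.map_id

theorem add_smul_mem_feasibleMeasures {Z : Set (E × Y)} {m : Measure E} {μ ν : Measure (E × Y)}
    (hμ : μ ∈ feasibleMeasures Z m) (hν : ν ∈ feasibleMeasures Z m) {a b : ℝ≥0∞}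
    (hab : a + b = 1) : a • μ + b • ν ∈ feasibleMeasures Z m := by
  obtain ⟨hμ_prob, hμZ, hμm⟩ := hμ
  obtain ⟨hν_prob, hνZ, hνm⟩ := hν
  refine ⟨⟨by simp [hab]⟩, by simp [hμZ, hνZ], ?_⟩
  rw [Measure.map_add _ _ measurable_fst, Measure.map_smul, Measure.map_smul, hμm, hνm,
    ← add_smul, hab, one_smul]

theorem lipschitzOnWith_fiberArgmin_selection {E Y : Type*} [PseudoMetricSpace E]
    {Z : Set (E × Y)} {ψ : E × Y → ℝ} {K : ℝ≥0}
    (hψ : ∀ z ∈ Z, ∀ x ∈ Prod.fst '' Z, ∃ y, (x, y) ∈ Z ∧ ψ (x, y) ≤ ψ z + K * dist x z.1)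
    {s : E → Y} (hs : ∀ x ∈ Prod.fst '' Z, (x, s x) ∈ fiberArgmin Z ψ) :
    LipschitzOnWith K (fun x => ψ (x, s x)) (Prod.fst '' Z) := by
  refine LipschitzOnWith.of_le_add_mul K fun x hx x' hx' => ?_
  obtain ⟨y, hyZ, hy⟩ := hψ _ (hs x' hx').1 x hx
  exact ((hs x hx).2 y hyZ).trans hy

variable [MetricSpace Y] [TopologicalSpace.SeparableSpace Y] [BorelSpace Y]

theorem feasibleMeasures_nonempty [TopologicalSpace E] {Z : Set (E × Y)} (hZ : MeasurableSet Z)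
    (hZc : IsMeasurableCompactGraph Z) {m : Measure E} [IsProbabilityMeasure m]
    (hm : m (Prod.fst '' Z)ᶜ = 0) : (feasibleMeasures Z m).Nonempty := by
  have hm_dom : ∀ᵐ x ∂m, x ∈ Prod.fst '' Z := hm
  obtain ⟨_, ⟨_, y⟩, _⟩ := hm_dom.exists
  have : Nonempty Y := ⟨y⟩
  obtain ⟨s, hs, hsZ⟩ := hZc.exists_measurable_selection
  exact ⟨_, map_graph_mem_feasibleMeasures hZ hs (hm_dom.mono hsZ)⟩

theorem exists_mem_feasibleMeasures_integral_sub_le [PseudoMetricSpace E] [BorelSpace E]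
    {Z : Set (E × Y)} (hZ : MeasurableSet Z)
    (hZc : IsMeasurableCompactGraph Z) {ψ : E × Y → ℝ} (hψ : Continuous ψ) {K : ℝ≥0}
    (hψ_lip : ∀ z ∈ Z, ∀ x ∈ Prod.fst '' Z, ∃ y, (x, y) ∈ Z ∧ ψ (x, y) ≤ ψ z + K * dist x z.1)
    {m₀ m₁ : Measure E} [IsProbabilityMeasure m₀] [IsProbabilityMeasure m₁]
    (hm₀ : HasFiniteFirstMoment m₀) (hm₁ : HasFiniteFirstMoment m₁)
    (hm₁Z : m₁ (Prod.fst '' Z)ᶜ = 0) {μ₀ : Measure (E × Y)} (hμ₀ : μ₀ ∈ feasibleMeasures Z m₀)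
    (hψμ₀ : Integrable ψ μ₀) :
    ∃ μ₁ ∈ feasibleMeasures Z m₁, ∫ z, ψ z ∂μ₁ - ∫ z, ψ z ∂μ₀ ≤ K * krDist m₁ m₀ := by
  obtain ⟨-, hμ₀Z, hμ₀m⟩ := hμ₀
  have hm₁_dom : ∀ᵐ x ∂m₁, x ∈ Prod.fst '' Z := hm₁Z
  have hμ₀_supp : ∀ᵐ z ∂μ₀, z ∈ Z := hμ₀Z
  obtain ⟨_, ⟨_, y⟩, _⟩ := hm₁_dom.exists
  have : Nonempty Y := ⟨y⟩
  obtain ⟨s, hs, hs_min⟩ := (hZc.fiberArgmin hψ).exists_measurable_selection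
  rw [fst_image_fiberArgmin hZc.isCompact_section hψ] at hs_min
  obtain ⟨F, hF, hF_eq⟩ := (lipschitzOnWith_fiberArgmin_selection hψ_lip hs_min).extend_real
  have hgraph : Measurable fun x => (x, s x) := measurable_id.prodMk hs
  refine ⟨_, map_graph_mem_feasibleMeasures hZ hs (hm₁_dom.mono fun x hx => (hs_min x hx).1), ?_⟩
  have h₁ : ∫ z, ψ z ∂m₁.map (fun x => (x, s x)) = ∫ x, F x ∂m₁ := by
    rw [integral_map hgraph.aemeasurable hψ.aestronglyMeasurable]
    exact integral_congr_ae (hm₁_dom.mono hF_eq)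
  have h₀ : ∫ x, F x ∂m₀ ≤ ∫ z, ψ z ∂μ₀ := by
    have hF_int : Integrable F (μ₀.map Prod.fst) := hμ₀m ▸ integrable_of_lipschitzWith hF hm₀
    rw [← hμ₀m, integral_map measurable_fst.aemeasurable hF_int.aestronglyMeasurable]
    refine integral_mono_ae (hF_int.comp_measurable measurable_fst) hψμ₀ ?_
    filter_upwards [hμ₀_supp] with z hz
    have hz_dom : z.1 ∈ Prod.fst '' Z := ⟨z, hz, rfl⟩
    exact (hF_eq hz_dom).symm.trans_le ((hs_min z.1 hz_dom).2 z.2 hz)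
  linarith [integral_sub_integral_le_mul_krDist hm₁ hm₀ hF]

end Bridging

section ConvexAnalysis

variable {H : Type*} [NormedAddCommGroup H] [NormedSpace ℝ H]

theorem infDist_le_of_forall_exists_sub_le {S : Set H} (hS : Convex ℝ S) {h : H} {c : ℝ}
    (hc : 0 ≤ c) (hφ : ∀ φ : StrongDual ℝ H, ∃ k ∈ S, φ k - φ h ≤ ‖φ‖ * c) :
    Metric.infDist h S ≤ c := by
  by_contra! hlt
  set r := Metric.infDist h S
  have hr : 0 < r := hc.trans_lt hlt
  obtain ⟨φ, u, hball, hS_ge⟩ := geometric_hahn_banach_open (convex_ball h r) Metric.isOpen_ball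
    hS Metric.disjoint_ball_infDist
  obtain ⟨k, hkS, hk⟩ := hφ φ
  have hstep {v : H} (hv : ‖v‖ < 1) : r * φ v < ‖φ‖ * c := by
    have hmem : h + r • v ∈ Metric.ball h r := by
      simpa [norm_smul, abs_of_pos hr] using mul_lt_of_lt_one_right hr hv
    have hlt_u := hball _ hmem
    rw [map_add, map_smul, smul_eq_mul] at hlt_u
    linarith [hS_ge k hkS]
  have hnorm : ‖φ‖ ≤ ‖φ‖ * c / r := by
    by_contra! hlt_norm
    obtain ⟨v, hv, hvφ⟩ := φ.exists_lt_apply_of_lt_opNorm hlt_norm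
    have habs : |φ v| < ‖φ‖ * c / r := abs_lt.2
      ⟨by rw [neg_lt, ← map_neg, lt_div_iff₀' hr]; exact hstep (by rwa [norm_neg]),
        by rw [lt_div_iff₀' hr]; exact hstep hv⟩
    exact hvφ.not_gt habs
  rw [le_div_iff₀ hr] at hnorm
  have hpos : 0 < ‖φ‖ * c := by simpa using hstep (v := 0) (by simp)
  nlinarith [norm_nonneg φ]

theorem convexOn_add_fderiv_le {f : H → ℝ} (hf : ConvexOn ℝ Set.univ f) {x : H}
    {f' : StrongDual ℝ H} (hf' : HasFDerivAt f f' x) (y : H) : f x + f' (y - x) ≤ f y := by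
  have hline : ConvexOn ℝ Set.univ (f ∘ AffineMap.lineMap (k := ℝ) x y) := hf.comp_affineMap _
  have hderiv : HasDerivAt (f ∘ AffineMap.lineMap (k := ℝ) x y) (f' (y - x)) 0 :=
    HasFDerivAt.comp_hasDerivAt 0 (by rwa [AffineMap.lineMap_apply_zero])
      AffineMap.hasDerivAt_lineMap
  have hslope := hline.le_slope_of_hasDerivAt (Set.mem_univ 0) (Set.mem_univ 1) one_pos hderiv
  simp only [slope_def_field, Function.comp_apply, AffineMap.lineMap_apply_zero,
    AffineMap.lineMap_apply_one, sub_zero, div_one] at hslope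
  linarith

theorem bddBelow_image_of_subgradient {f : H → ℝ} {x : H} {φ : StrongDual ℝ H}
    (hφ : ∀ y, f x + φ (y - x) ≤ f y) {S : Set H} (hS : Bornology.IsBounded S) :
    BddBelow (f '' S) := by
  obtain ⟨R, hR⟩ := hS.subset_closedBall x
  refine ⟨f x - ‖φ‖ * R, ?_⟩
  rintro _ ⟨y, hy, rfl⟩
  have hdist : ‖y - x‖ ≤ R := mem_closedBall_iff_norm.1 (hR hy)
  have hle : -(‖φ‖ * R) ≤ φ (y - x) :=
    (abs_le.1 ((φ.le_opNorm (y - x)).trans (by gcongr))).1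
  linarith [hφ y]

theorem csInf_image_le_add_mul_infDist {H : Type*} [PseudoMetricSpace H] {f : H → ℝ} {S : Set H}
    (hS : S.Nonempty) (hbdd : BddBelow (f '' S)) {h : H} {C : ℝ} (hC : 0 ≤ C)
    (hf : ∀ k ∈ S, f k ≤ f h + C * dist h k) :
    sInf (f '' S) ≤ f h + C * Metric.infDist h S := by
  have hle {k : H} (hk : k ∈ S) : sInf (f '' S) - f h ≤ C * dist h k := by
    linarith [csInf_le hbdd (Set.mem_image_of_mem f hk), hf k hk]
  rw [← sub_le_iff_le_add']
  obtain rfl | hC := hC.eq_or_lt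
  · obtain ⟨k, hk⟩ := hS
    simpa using hle hk
  · rw [← div_le_iff₀' hC, Metric.le_infDist hS]
    exact fun k hk => (div_le_iff₀' hC).2 (hle hk)

end ConvexAnalysis

section ValueFunction

variable {E Y H : Type*} [MeasurableSpace E] [MeasurableSpace Y]
  [NormedAddCommGroup H] [NormedSpace ℝ H]

/-- The set of aggregates `∫ g dμ` attainable with `μ ∈ 𝒫_m(Z)`. -/
def aggregates (Z : Set (E × Y)) (g : E × Y → H) (m : Measure E) : Set H :=
  (fun μ => ∫ z, g z ∂μ) '' feasibleMeasures Z m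

/-- The value function `V(m) = inf {f (∫ g dμ) | μ ∈ 𝒫_m(Z)}` of the mean-field optimization
problem. -/
noncomputable def valueFunction (Z : Set (E × Y)) (g : E × Y → H) (f : H → ℝ) (m : Measure E) : ℝ :=
  sInf ((fun μ => f (∫ z, g z ∂μ)) '' feasibleMeasures Z m)

theorem valueFunction_eq_sInf_image_aggregates (Z : Set (E × Y)) (g : E × Y → H) (f : H → ℝ)
    (m : Measure E) : valueFunction Z g f m = sInf (f '' aggregates Z g m) := by
  rw [aggregates, Set.image_image, valueFunction]

theorem isBounded_aggregates {Z : Set (E × Y)} {g : E × Y → H} {M : ℝ} (hM : ∀ z ∈ Z, ‖g z‖ ≤ M)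
    (m : Measure E) : Bornology.IsBounded (aggregates Z g m) := by
  refine isBounded_iff_forall_norm_le.2 ⟨M, ?_⟩
  rintro _ ⟨μ, ⟨hμ_prob, hμZ, -⟩, rfl⟩
  have hμ_supp : ∀ᵐ z ∂μ, z ∈ Z := hμZ
  simpa using norm_integral_le_of_norm_le_const (hμ_supp.mono hM)

theorem integrable_of_mem_feasibleMeasures {H : Type*} [NormedAddCommGroup H]
    {Z : Set (E × Y)} {g : E × Y → H} {M : ℝ} {m : Measure E} {μ : Measure (E × Y)}
    (hμ : μ ∈ feasibleMeasures Z m) (hg : AEStronglyMeasurable g μ) (hM : ∀ z ∈ Z, ‖g z‖ ≤ M) :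
    Integrable g μ := by
  obtain ⟨hμ_prob, hμZ, -⟩ := hμ
  have hμ_supp : ∀ᵐ z ∂μ, z ∈ Z := hμZ
  exact .of_bound hg M (hμ_supp.mono hM)

theorem convex_aggregates {Z : Set (E × Y)} {g : E × Y → H} {m : Measure E}
    (hg : ∀ μ ∈ feasibleMeasures Z m, Integrable g μ) : Convex ℝ (aggregates Z g m) := by
  rintro _ ⟨μ, hμ, rfl⟩ _ ⟨ν, hν, rfl⟩ a b ha hb hab
  have hab' : ENNReal.ofReal a + ENNReal.ofReal b = 1 := by
    rw [← ENNReal.ofReal_add ha hb, hab, ENNReal.ofReal_one]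
  refine ⟨_, add_smul_mem_feasibleMeasures hμ hν hab', ?_⟩
  simp only [integral_add_measure ((hg μ hμ).smul_measure ENNReal.ofReal_ne_top)
    ((hg ν hν).smul_measure ENNReal.ofReal_ne_top), integral_smul_measure,
    ENNReal.toReal_ofReal ha, ENNReal.toReal_ofReal hb]

variable [PseudoMetricSpace E] [SecondCountableTopology E] [BorelSpace E]
  [MetricSpace Y] [SecondCountableTopology Y] [BorelSpace Y] [CompleteSpace H]
  {Z : Set (E × Y)} {g : E × Y → H} {M : ℝ} {Lg : ℝ≥0} {m₀ m₁ : Measure E}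
  [IsProbabilityMeasure m₀] [IsProbabilityMeasure m₁]

theorem infDist_aggregates_le (hZ : MeasurableSet Z) (hZc : IsMeasurableCompactGraph Z)
    (hg : Continuous g) (hM : ∀ z ∈ Z, ‖g z‖ ≤ M)
    (hlip : ∀ z ∈ Z, ∀ x ∈ Prod.fst '' Z, ∃ y, (x, y) ∈ Z ∧ ‖g (x, y) - g z‖ ≤ Lg * dist x z.1)
    (hm₀ : HasFiniteFirstMoment m₀) (hm₁ : HasFiniteFirstMoment m₁)
    (hm₁Z : m₁ (Prod.fst '' Z)ᶜ = 0) {h : H} (hh : h ∈ aggregates Z g m₀) :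
    Metric.infDist h (aggregates Z g m₁) ≤ Lg * krDist m₁ m₀ := by
  obtain ⟨μ₀, hμ₀, rfl⟩ := hh
  have hint {m : Measure E} {μ : Measure (E × Y)} (hμ : μ ∈ feasibleMeasures Z m) :=
    integrable_of_mem_feasibleMeasures hμ hg.aestronglyMeasurable hM
  refine infDist_le_of_forall_exists_sub_le (convex_aggregates fun μ hμ => hint hμ)
    (mul_nonneg Lg.2 (krDist_nonneg m₁ m₀)) fun φ => ?_
  have hφ_lip : ∀ z ∈ Z, ∀ x ∈ Prod.fst '' Z,
      ∃ y, (x, y) ∈ Z ∧ φ (g (x, y)) ≤ φ (g z) + (‖φ‖₊ * Lg : ℝ≥0) * dist x z.1 := by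
    intro z hz x hx
    obtain ⟨y, hyZ, hy⟩ := hlip z hz x hx
    refine ⟨y, hyZ, sub_le_iff_le_add'.1 ?_⟩
    calc φ (g (x, y)) - φ (g z) = φ (g (x, y) - g z) := (map_sub φ _ _).symm
      _ ≤ ‖φ‖ * ‖g (x, y) - g z‖ := (le_abs_self _).trans (φ.le_opNorm _)
      _ ≤ ‖φ‖ * (Lg * dist x z.1) := by gcongr
      _ = (‖φ‖₊ * Lg : ℝ≥0) * dist x z.1 := by push_cast; rw [mul_assoc]
  obtain ⟨μ₁, hμ₁, hle⟩ := exists_mem_feasibleMeasures_integral_sub_le hZ hZc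
    (φ.continuous.comp hg) hφ_lip hm₀ hm₁ hm₁Z hμ₀ (φ.integrable_comp (hint hμ₀))
  refine ⟨_, ⟨μ₁, hμ₁, rfl⟩, ?_⟩
  simpa [φ.integral_comp_comm (hint hμ₀), φ.integral_comp_comm (hint hμ₁), mul_assoc] using hle

theorem valueFunction_le_add_mul_krDist (hZ : MeasurableSet Z) (hZc : IsMeasurableCompactGraph Z)
    (hg : Continuous g) (hM : ∀ z ∈ Z, ‖g z‖ ≤ M)
    {f : H → ℝ} {f' : H → StrongDual ℝ H} (hf' : ∀ x y, f x + f' x (y - x) ≤ f y)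
    (hlip : ∀ z ∈ Z, ∀ x ∈ Prod.fst '' Z, ∃ y, (x, y) ∈ Z ∧ ‖g (x, y) - g z‖ ≤ Lg * dist x z.1)
    {C : ℝ} (hC : ∀ k ∈ aggregates Z g m₁, ‖f' k‖ ≤ C)
    (hm₀ : HasFiniteFirstMoment m₀) (hm₁ : HasFiniteFirstMoment m₁)
    (hm₀Z : m₀ (Prod.fst '' Z)ᶜ = 0) (hm₁Z : m₁ (Prod.fst '' Z)ᶜ = 0) :
    valueFunction Z g f m₁ ≤ valueFunction Z g f m₀ + Lg * C * krDist m₁ m₀ := by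
  simp only [valueFunction_eq_sInf_image_aggregates]
  have hne₁ : (aggregates Z g m₁).Nonempty := (feasibleMeasures_nonempty hZ hZc hm₁Z).image _
  have hC_nonneg : 0 ≤ C := (norm_nonneg _).trans (hC _ hne₁.some_mem)
  rw [← sub_le_iff_le_add]
  refine le_csInf (((feasibleMeasures_nonempty hZ hZc hm₀Z).image _).image f) ?_
  rintro _ ⟨h, hh, rfl⟩
  have hf_le (k : H) (hk : k ∈ aggregates Z g m₁) : f k ≤ f h + C * dist h k := by
    have hneg : -f' k (h - k) ≤ C * dist h k := calc
      -f' k (h - k) ≤ ‖f' k‖ * ‖h - k‖ := (neg_le_abs _).trans ((f' k).le_opNorm _)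
      _ ≤ C * dist h k := by rw [dist_eq_norm]; gcongr; exact hC k hk
    linarith [hf' k h]
  rw [sub_le_iff_le_add]
  calc sInf (f '' aggregates Z g m₁) ≤ f h + C * Metric.infDist h (aggregates Z g m₁) :=
        csInf_image_le_add_mul_infDist hne₁
          (bddBelow_image_of_subgradient (hf' h) (isBounded_aggregates hM m₁)) hC_nonneg hf_le
    _ ≤ f h + C * (Lg * krDist m₁ m₀) := by
        gcongr
        exact infDist_aggregates_le hZ hZc hg hM hlip hm₀ hm₁ hm₁Z hh
    _ = f h + Lg * C * krDist m₁ m₀ := by ring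

end ValueFunction

theorem stmt_13_general {E Y H : Type*}
    [PseudoMetricSpace E] [SecondCountableTopology E] [MeasurableSpace E] [BorelSpace E]
    [MetricSpace Y] [SecondCountableTopology Y] [MeasurableSpace Y] [BorelSpace Y]
    [NormedAddCommGroup H] [NormedSpace ℝ H] [CompleteSpace H]
    {Z : Set (E × Y)} (hZ : MeasurableSet Z) (hZc : IsMeasurableCompactGraph Z)
    {g : E × Y → H} (hg : Continuous g) {M : ℝ} (hM : ∀ z ∈ Z, ‖g z‖ ≤ M)
    {f : H → ℝ} {f' : H → StrongDual ℝ H} (hf' : ∀ x y, f x + f' x (y - x) ≤ f y)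
    {Lg : ℝ≥0}
    (hlip : ∀ z ∈ Z, ∀ x ∈ Prod.fst '' Z, ∃ y, (x, y) ∈ Z ∧ ‖g (x, y) - g z‖ ≤ Lg * dist x z.1)
    {C : ℝ} {m₀ m₁ : Measure E} [IsProbabilityMeasure m₀] [IsProbabilityMeasure m₁]
    (hC : ∀ k ∈ aggregates Z g m₀ ∪ aggregates Z g m₁, ‖f' k‖ ≤ C)
    (hm₀ : HasFiniteFirstMoment m₀) (hm₁ : HasFiniteFirstMoment m₁)
    (hm₀Z : m₀ (Prod.fst '' Z)ᶜ = 0) (hm₁Z : m₁ (Prod.fst '' Z)ᶜ = 0) :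
    |valueFunction Z g f m₀ - valueFunction Z g f m₁| ≤ Lg * C * krDist m₀ m₁ := by
  have h₀ := valueFunction_le_add_mul_krDist hZ hZc hg hM hf' hlip (fun k hk => hC k (.inl hk))
    hm₁ hm₀ hm₁Z hm₀Z
  have h₁ := valueFunction_le_add_mul_krDist hZ hZc hg hM hf' hlip (fun k hk => hC k (.inr hk))
    hm₀ hm₁ hm₀Z hm₁Z
  rw [krDist_comm] at h₁
  exact abs_sub_le_iff.2 ⟨sub_le_iff_le_add'.2 h₀, sub_le_iff_le_add'.2 h₁⟩

/-- Lipschitz stability of the value function of the MFO problem with respect to the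
marginal, for the Kantorovich–Rubinstein distance:
`|V(m₀) − V(m₁)| ≤ L_g (C + L M) d₁(m₀, m₁)`. -/
theorem stmt_13 {E Y H : Type*}
    [NormedAddCommGroup E] [NormedSpace ℝ E] [CompleteSpace E]
    [SecondCountableTopology E] [MeasurableSpace E] [BorelSpace E]
    [MetricSpace Y] [CompleteSpace Y] [SecondCountableTopology Y]
    [MeasurableSpace Y] [BorelSpace Y]
    [NormedAddCommGroup H] [InnerProductSpace ℝ H] [CompleteSpace H]
    [SecondCountableTopology H] [MeasurableSpace H] [BorelSpace H]
    (X : Set E) (hX : IsClosed X)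
    (Z : Set (E × Y)) (hZc : IsClosed Z) (hZX : ∀ z ∈ Z, z.1 ∈ X)
    (hsec : ∀ x ∈ X, IsCompact {y | (x, y) ∈ Z} ∧ {y | (x, y) ∈ Z}.Nonempty)
    (husc : ∀ x ∈ X, ∀ U : Set Y, IsOpen U → {y | (x, y) ∈ Z} ⊆ U →
      ∃ η > (0 : ℝ), ∀ x' ∈ X, dist x x' < η → {y | (x', y) ∈ Z} ⊆ U)
    (g : E × Y → H) (hgc : Continuous g) (M : ℝ) (hM : ∀ z, ‖g z‖ ≤ M)
    (f : H → ℝ) (f' : H → H)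
    (hconv : ConvexOn ℝ Set.univ f)
    (hdiff : ∀ x, HasGradientAt f (f' x) x)
    (L : ℝ≥0) (hlipf : LipschitzWith L f')
    (Lg C : ℝ) (hLg : 0 ≤ Lg)
    (hlip : ∀ x₁ ∈ X, ∀ x₂ ∈ X, ∀ y₁, (x₁, y₁) ∈ Z →
      ∃ y₂, (x₂, y₂) ∈ Z ∧ ‖g (x₂, y₂) - g (x₁, y₁)‖ ≤ Lg * dist x₁ x₂)
    (hC : ∀ μ : Measure (E × Y), IsProbabilityMeasure μ → μ Zᶜ = 0 →
      ‖f' (∫ z, g z ∂μ)‖ ≤ C)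
    (m0 m1 : Measure E) [IsProbabilityMeasure m0] [IsProbabilityMeasure m1]
    (hm0X : m0 Xᶜ = 0) (hm1X : m1 Xᶜ = 0)
    (hm0 : ∃ x₀ : E, Integrable (fun x => dist x x₀) m0)
    (hm1 : ∃ x₀ : E, Integrable (fun x => dist x x₀) m1)
    (V : Measure E → ℝ)
    (hV : ∀ m : Measure E, V m = sInf ((fun μ => f (∫ z, g z ∂μ)) ''
      {μ : Measure (E × Y) | IsProbabilityMeasure μ ∧ μ Zᶜ = 0 ∧ μ.map Prod.fst = m}))
    (d1 : ℝ)
    (hd1 : d1 = sSup {r | ∃ F : E → ℝ, LipschitzWith 1 F ∧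
      r = ∫ x, F x ∂m0 - ∫ x, F x ∂m1}) :
    |V m0 - V m1| ≤ Lg * (C + (L : ℝ) * M) * d1 := by
  obtain rfl : X = Prod.fst '' Z := Set.Subset.antisymm
    (fun x hx => mem_fst_image_iff.2 (hsec x hx).2) (Set.image_subset_iff.2 hZX)
  lift Lg to ℝ≥0 using hLg
  have hgraph : IsMeasurableCompactGraph Z := .of_upperHemicontinuousOn hX
    (fun x hx => (hsec x hx).1) (upperHemicontinuousOn_of_forall_exists_dist_lt husc)
  have hdist : |V m0 - V m1| ≤ Lg * C * d1 := by
    rw [hV, hV, hd1]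
    refine stmt_13_general hZc.measurableSet hgraph hgc (fun z _ => hM z)
      (f' := fun x => InnerProductSpace.toDual ℝ H (f' x))
      (fun x => convexOn_add_fderiv_le hconv (hdiff x).hasFDerivAt)
      (fun z hz x hx => ?_) ?_ hm0 hm1 hm0X hm1X
    · rw [dist_comm]
      exact hlip z.1 ⟨z, hz, rfl⟩ x hx z.2 hz
    · rintro _ (⟨μ, hμ, rfl⟩ | ⟨μ, hμ, rfl⟩) <;>
        exact (LinearIsometryEquiv.norm_map _ _).trans_le (hC μ hμ.1 hμ.2.1)
  have hm0_dom : ∀ᵐ x ∂m0, x ∈ Prod.fst '' Z := hm0X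
  obtain ⟨_, z, -, -⟩ := hm0_dom.exists
  have hM_nonneg : 0 ≤ M := (norm_nonneg _).trans (hM z)
  have hd1_nonneg : 0 ≤ d1 := hd1 ▸ krDist_nonneg m0 m1
  refine hdist.trans ?_
  gcongr
  exact le_add_of_nonneg_right (by positivity)
end
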